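/- arXiv:2111.07289 — 3 statements merged into one kernel-verified Lean document; each statement's English description precedes it below -/
import Mathlib

section
/- Let G = G_{X,d}(A,B) be a proximinal graph for an ultrametric space (X,d). Then the following statements are equivalent: (1) diam(B) ≤ dist(A,B); (2) G is nonempty and G' is a complete bipartite graph such that B ⊆ V(G'). -/
open Set

/-- A semimetric on a set `X`: a symmetric, nonnegative distance function
vanishing exactly on the diagonal. -/
structure IsSemimetric {X : Type*} (d : X → X → ℝ) : Prop where
  nonneg : ∀ x y, 0 ≤ d x y
  symm : ∀ x y, d x y = d y x
  eq_zero_iff : ∀ x y, d x y = 0 ↔ x = y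

/-- A metric: a semimetric satisfying the triangle inequality. -/
def IsMetric {X : Type*} (d : X → X → ℝ) : Prop :=
  IsSemimetric d ∧ ∀ x y z, d x y ≤ d x z + d z y

/-- An ultrametric: a semimetric satisfying the strong triangle inequality
(which implies the triangle inequality). -/
def IsUltrametric {X : Type*} (d : X → X → ℝ) : Prop :=
  IsSemimetric d ∧ ∀ x y z, d x y ≤ max (d x z) (d z y)

/-- `dist(A,B) = inf {d a b : a ∈ A, b ∈ B}`. -/
noncomputable def SetDist {X : Type*} (d : X → X → ℝ) (A B : Set X) : ℝ :=
  sInf (Set.image2 d A B)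

/-- `A` is proximinal in `(X,d)`: every point of `X` has a best approximation in `A`. -/
def Proximinal {X : Type*} (d : X → X → ℝ) (A : Set X) : Prop :=
  ∀ x : X, ∃ a ∈ A, d x a = sInf ((d x) '' A)

/-- `G` is the proximinal graph `G_{X,d}(A,B)`: a bipartite graph with (nonempty,
disjoint, proximinal) parts `A` and `B`, whose vertex set is `A ∪ B` (all other
points of the ambient type are isolated and are not vertices of the graph), and in
which `a ∈ A` and `b ∈ B` are adjacent iff `d a b = dist(A,B)`. -/
structure ProximinalFor {X : Type*} (d : X → X → ℝ) (G : SimpleGraph X) (A B : Set X) : Prop where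
  nonemptyA : A.Nonempty
  nonemptyB : B.Nonempty
  disj : Disjoint A B
  proxA : Proximinal d A
  proxB : Proximinal d B
  edges_between : ∀ u v, G.Adj u v → (u ∈ A ∧ v ∈ B) ∨ (u ∈ B ∧ v ∈ A)
  adj_iff : ∀ a ∈ A, ∀ b ∈ B, (G.Adj a b ↔ d a b = SetDist d A B)

/-- `G` is a farthest graph for `(X,d)` with parts `A`, `B`: `a ∈ A` and `b ∈ B`
are adjacent iff `d a b = sup {d x y : x ∈ A, y ∈ B}`, i.e. iff `d a b` is an upper
bound of all the cross distances. -/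
structure FarthestFor {X : Type*} (d : X → X → ℝ) (G : SimpleGraph X) (A B : Set X) : Prop where
  nonemptyA : A.Nonempty
  nonemptyB : B.Nonempty
  disj : Disjoint A B
  edges_between : ∀ u v, G.Adj u v → (u ∈ A ∧ v ∈ B) ∨ (u ∈ B ∧ v ∈ A)
  adj_iff : ∀ a ∈ A, ∀ b ∈ B, (G.Adj a b ↔ ∀ x ∈ A, ∀ y ∈ B, d x y ≤ d a b)

/-!
If `diam B ≤ dist(A,B)`, then in every triangle `a, b, c` with `a ∈ A` and `b, c ∈ B` the side `bc`
is not longer than the other two, so these are equal: the distance from `a` does not distinguish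
the points of `B`. Hence all points of `B` have the same neighbours, and a best approximation in
`A` of a single point of `B` already realises `dist(A,B)`. Conversely, if a point `a` is at
distance `dist(A,B)` from every point of `B`, then `B` is contained in a ball of that radius, and
in an ultrametric space the diameter of a ball does not exceed its radius. Among bipartite graphs
with an edge, those in which all vertices of `B` have the same neighbours are exactly those for
which `G'` is complete bipartite and contains `B`.
-/

section Graph

variable {V : Type*} {G : SimpleGraph V} {A B S : Set V}

/-- The subgraph `G'` on the non-isolated vertices of `G` is a complete bipartite graph. The
isolated vertices are kept in the ambient type, so `V(G')` is `G.support`. -/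
def IsCompleteBipartiteOnSupport (G : SimpleGraph V) : Prop :=
  ∃ P Q : Set V, P.Nonempty ∧ Q.Nonempty ∧ Disjoint P Q ∧ P ∪ Q = G.support ∧
    ∀ u v, G.Adj u v ↔ ((u ∈ P ∧ v ∈ Q) ∨ (u ∈ Q ∧ v ∈ P))

/-- The vertices of `S` are pairwise (false) twins, i.e. have the same neighbours in `G`. One
inclusion suffices, the two vertices being interchangeable. -/
def ArePairwiseTwins (G : SimpleGraph V) (S : Set V) : Prop :=
  ∀ b ∈ S, ∀ c ∈ S, G.neighborSet b ⊆ G.neighborSet c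

theorem exists_adj_of_isBipartiteWith (hG : G.IsBipartiteWith A B) (hne : G.edgeSet.Nonempty) :
    ∃ a ∈ A, ∃ b ∈ B, G.Adj a b := by
  obtain ⟨u, v, huv⟩ := SimpleGraph.ne_bot_iff_exists_adj.1 (SimpleGraph.edgeSet_nonempty.1 hne)
  rcases hG.mem_of_adj huv with ⟨hu, hv⟩ | ⟨hu, hv⟩
  · exact ⟨u, hu, v, hv, huv⟩
  · exact ⟨v, hv, u, hu, huv.symm⟩

theorem isIndepSet_right_of_isBipartiteWith (hG : G.IsBipartiteWith A B) : G.IsIndepSet B :=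
  fun _ hb _ hc _ hbc => hG.disjoint.notMem_of_mem_left (hG.mem_of_mem_adj' hc hbc) hb

theorem IsCompleteBipartiteOnSupport.arePairwiseTwins (hG : IsCompleteBipartiteOnSupport G)
    (hS : S ⊆ G.support) (hindep : G.IsIndepSet S) : ArePairwiseTwins G S := by
  intro b hb c hc a hba
  have hbc : ¬ G.Adj b c := fun h => hindep hb hc h.ne h
  obtain ⟨P, Q, -, -, hPQ, hsupp, hadj⟩ := hG
  have hc' : c ∈ P ∪ Q := hsupp ▸ hS hc
  rw [SimpleGraph.mem_neighborSet, hadj] at hba ⊢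
  rw [hadj, not_or] at hbc
  -- As `b` and `c` are not adjacent, they lie in the same part, opposite to that of `a`.
  rcases hba with ⟨hbP, haQ⟩ | ⟨hbQ, haP⟩
  · exact Or.inl ⟨hc'.resolve_right fun hcQ => hbc.1 ⟨hbP, hcQ⟩, haQ⟩
  · exact Or.inr ⟨hc'.resolve_left fun hcP => hbc.2 ⟨hbQ, hcP⟩, haP⟩

theorem ArePairwiseTwins.subset_support (hS : ArePairwiseTwins G S) {a b : V} (hb : b ∈ S)
    (hab : G.Adj a b) : S ⊆ G.support :=
  fun c hc => ⟨a, hS b hb c hc hab.symm⟩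

theorem ArePairwiseTwins.isCompleteBipartiteOnSupport (hB : ArePairwiseTwins G B)
    (hG : G.IsBipartiteWith A B) {a b : V} (hb : b ∈ B) (hab : G.Adj a b) :
    IsCompleteBipartiteOnSupport G := by
  have hadj : ∀ u v, G.Adj u v ↔
      ((u ∈ G.neighborSet b ∧ v ∈ B) ∨ (u ∈ B ∧ v ∈ G.neighborSet b)) := by
    intro u v
    constructor
    · intro huv
      rcases hG.mem_of_adj huv with ⟨-, hv⟩ | ⟨hu, -⟩
      · exact Or.inl ⟨hB v hv b hb huv.symm, hv⟩
      · exact Or.inr ⟨hu, hB u hu b hb huv⟩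
    · rintro (⟨hu, hv⟩ | ⟨hu, hv⟩)
      · exact (hB b hb v hv hu).symm
      · exact hB b hb u hu hv
  refine ⟨G.neighborSet b, B, ⟨a, hab.symm⟩, ⟨b, hb⟩,
    SimpleGraph.isBipartiteWith_neighborSet_disjoint' hG hb, Subset.antisymm ?_ ?_, hadj⟩
  · exact union_subset (fun u hu => ⟨b, hu.symm⟩) (hB.subset_support hb hab)
  · rintro u ⟨v, huv⟩
    exact ((hadj u v).1 huv).imp And.left And.left

theorem isCompleteBipartiteOnSupport_and_subset_support_iff (hG : G.IsBipartiteWith A B)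
    (hne : G.edgeSet.Nonempty) :
    IsCompleteBipartiteOnSupport G ∧ B ⊆ G.support ↔ ArePairwiseTwins G B := by
  constructor
  · rintro ⟨hcomplete, hsupp⟩
    exact hcomplete.arePairwiseTwins hsupp (isIndepSet_right_of_isBipartiteWith hG)
  · intro hB
    obtain ⟨a, -, b, hb, hab⟩ := exists_adj_of_isBipartiteWith hG hne
    exact ⟨hB.isCompleteBipartiteOnSupport hG hb hab, hB.subset_support hb hab⟩

end Graph

section Distance

variable {X : Type*} {d : X → X → ℝ} {A B : Set X} {a b c : X}

/-- A pseudo-ultrametric: like an ultrametric, except that distinct points may be at distance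
zero. Nonnegativity is a consequence. -/
structure IsPseudoUltrametric (d : X → X → ℝ) : Prop where
  self : ∀ x, d x x = 0
  symm : ∀ x y, d x y = d y x
  le_max : ∀ x y z, d x y ≤ max (d x z) (d z y)

theorem IsUltrametric.isPseudoUltrametric (hd : IsUltrametric d) : IsPseudoUltrametric d where
  self x := (hd.1.eq_zero_iff x x).2 rfl
  symm := hd.1.symm
  le_max := hd.2

theorem IsPseudoUltrametric.nonneg (hd : IsPseudoUltrametric d) (x y : X) : 0 ≤ d x y := by
  simpa only [hd.self, hd.symm y x, max_self] using hd.le_max x x y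

theorem IsPseudoUltrametric.eq_of_le_of_le (hd : IsPseudoUltrametric d) (hb : d b c ≤ d a b)
    (hc : d b c ≤ d a c) : d a b = d a c :=
  le_antisymm ((hd.le_max a b c).trans (max_le le_rfl (hd.symm c b ▸ hc)))
    ((hd.le_max a c b).trans (max_le le_rfl hb))

theorem setDist_le (hnonneg : ∀ x y, 0 ≤ d x y) (ha : a ∈ A) (hb : b ∈ B) :
    SetDist d A B ≤ d a b :=
  csInf_le ⟨0, forall_mem_image2.2 fun x _ y _ => hnonneg x y⟩ (mem_image2_of_mem ha hb)

theorem Proximinal.exists_isMinOn (hA : Proximinal d A) (hnonneg : ∀ x y, 0 ≤ d x y)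
    (x : X) : ∃ a ∈ A, IsMinOn (d x) A a := by
  obtain ⟨a, ha, hxa⟩ := hA x
  refine ⟨a, ha, isMinOn_iff.2 fun y hy => ?_⟩
  rw [hxa]
  exact csInf_le ⟨0, forall_mem_image.2 fun z _ => hnonneg x z⟩ (mem_image_of_mem _ hy)

theorem IsPseudoUltrametric.eq_of_forall_le_setDist (hd : IsPseudoUltrametric d)
    (hB : ∀ x ∈ B, ∀ y ∈ B, d x y ≤ SetDist d A B) (ha : a ∈ A) (hb : b ∈ B) (hc : c ∈ B) :
    d a b = d a c :=
  hd.eq_of_le_of_le ((hB b hb c hc).trans (setDist_le hd.nonneg ha hb))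
    ((hB b hb c hc).trans (setDist_le hd.nonneg ha hc))

theorem IsPseudoUltrametric.eq_setDist_of_isMinOn (hd : IsPseudoUltrametric d)
    (hB : ∀ x ∈ B, ∀ y ∈ B, d x y ≤ SetDist d A B) (ha : a ∈ A) (hb : b ∈ B)
    (hmin : IsMinOn (d b) A a) : d a b = SetDist d A B := by
  refine le_antisymm ?_ (setDist_le hd.nonneg ha hb)
  refine le_csInf ⟨_, mem_image2_of_mem ha hb⟩ (forall_mem_image2.2 fun x hx y hy => ?_)
  calc
    d a b = d b a := hd.symm a b
    _ ≤ d b x := isMinOn_iff.1 hmin x hx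
    _ = d x b := hd.symm b x
    _ = d x y := hd.eq_of_forall_le_setDist hB hx hb hy

end Distance

section NearestPairGraph

variable {X : Type*} {d : X → X → ℝ} {G : SimpleGraph X} {A B : Set X}

/-- `G` joins exactly the pairs of points of the disjoint sets `A` and `B` that realise
`dist(A,B)`: a proximinal graph whose parts need not be proximinal. -/
structure IsNearestPairGraph (d : X → X → ℝ) (G : SimpleGraph X) (A B : Set X) : Prop where
  isBipartiteWith : G.IsBipartiteWith A B
  adj_iff : ∀ a ∈ A, ∀ b ∈ B, (G.Adj a b ↔ d a b = SetDist d A B)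

theorem ProximinalFor.isNearestPairGraph (hG : ProximinalFor d G A B) :
    IsNearestPairGraph d G A B where
  isBipartiteWith := ⟨hG.disj, hG.edges_between⟩
  adj_iff := hG.adj_iff

theorem IsNearestPairGraph.edgeSet_nonempty (hG : IsNearestPairGraph d G A B)
    (hd : IsPseudoUltrametric d) (hmin : ∃ b ∈ B, ∃ a ∈ A, IsMinOn (d b) A a)
    (hB : ∀ x ∈ B, ∀ y ∈ B, d x y ≤ SetDist d A B) : G.edgeSet.Nonempty := by
  obtain ⟨b, hb, a, ha, hba⟩ := hmin
  exact ⟨s(a, b), (hG.adj_iff a ha b hb).2 (hd.eq_setDist_of_isMinOn hB ha hb hba)⟩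

theorem IsNearestPairGraph.forall_le_setDist_iff_arePairwiseTwins
    (hG : IsNearestPairGraph d G A B) (hd : IsPseudoUltrametric d) (hne : G.edgeSet.Nonempty) :
    (∀ x ∈ B, ∀ y ∈ B, d x y ≤ SetDist d A B) ↔ ArePairwiseTwins G B := by
  constructor
  · intro hB b hb c hc a hba
    have ha : a ∈ A := hG.isBipartiteWith.mem_of_mem_adj' hb hba.symm
    refine ((hG.adj_iff a ha c hc).2 ?_).symm
    rw [← hd.eq_of_forall_le_setDist hB ha hb hc]
    exact (hG.adj_iff a ha b hb).1 hba.symm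
  · intro htwins x hx y hy
    obtain ⟨a, ha, b, hb, hab⟩ := exists_adj_of_isBipartiteWith hG.isBipartiteWith hne
    have dist_eq : ∀ c ∈ B, d a c = SetDist d A B := fun c hc =>
      (hG.adj_iff a ha c hc).1 (htwins b hb c hc hab.symm).symm
    calc
      d x y ≤ max (d x a) (d a y) := hd.le_max x y a
      _ = SetDist d A B := by rw [hd.symm x a, dist_eq x hx, dist_eq y hy, max_self]

end NearestPairGraph

theorem stmt7_general {X : Type*} {d : X → X → ℝ} {G : SimpleGraph X} {A B : Set X}
    (hd : IsPseudoUltrametric d) (hG : IsNearestPairGraph d G A B)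
    (hmin : ∃ b ∈ B, ∃ a ∈ A, IsMinOn (d b) A a) :
    (∀ x ∈ B, ∀ y ∈ B, d x y ≤ SetDist d A B) ↔
      (G.edgeSet.Nonempty ∧ IsCompleteBipartiteOnSupport G ∧ B ⊆ G.support) := by
  rw [← and_iff_right_of_imp (hG.edgeSet_nonempty hd hmin)]
  refine and_congr_right fun hne => ?_
  rw [hG.forall_le_setDist_iff_arePairwiseTwins hd hne,
    isCompleteBipartiteOnSupport_and_subset_support_iff hG.isBipartiteWith hne]

/-- Proposition 2.5: for a proximinal graph `G = G_{X,d}(A,B)` over an ultrametric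
space `(X,d)`, `diam B ≤ dist(A,B)` iff `G` is nonempty and `G'` (the subgraph of
`G` induced by the non-isolated vertices, i.e. by `G.support`) is a complete
bipartite graph with `B ⊆ V(G')`. -/
theorem stmt7 {X : Type*} (d : X → X → ℝ) (hd : IsUltrametric d)
    (G : SimpleGraph X) (A B : Set X) (hG : ProximinalFor d G A B) :
    (∀ x ∈ B, ∀ y ∈ B, d x y ≤ SetDist d A B) ↔
      (G.edgeSet.Nonempty ∧
        (∃ P Q : Set X, P.Nonempty ∧ Q.Nonempty ∧ Disjoint P Q ∧
          P ∪ Q = G.support ∧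
          ∀ u v, G.Adj u v ↔ ((u ∈ P ∧ v ∈ Q) ∨ (u ∈ Q ∧ v ∈ P))) ∧
        B ⊆ G.support) := by
  obtain ⟨b, hb⟩ := hG.nonemptyB
  exact stmt7_general hd.isPseudoUltrametric hG.isNearestPairGraph
    ⟨b, hb, hG.proxA.exists_isMinOn hd.1.nonneg b⟩
end

section
/- A bipartite graph G is not isomorphic to any farthest graph if and only if G is finite and empty. -/
open Set

universe u

/-!
A farthest graph with finite parts has an edge, because the cross distances attain their maximum.
Conversely, a bipartite graph with an edge is farthest for the semimetric taking the value `2` on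
edges and `1` on the other pairs of distinct points, and an empty graph with infinitely many
vertices is farthest for the semimetric `f x + f y` (`x ≠ y`), where `f` is positive and unbounded:
`f` is then unbounded on one of the two parts, so no cross distance is maximal.
-/

/-- The distance that agrees with `w` off the diagonal and vanishes on it. It turns a positive
symmetric weight into a semimetric without changing the distances between disjoint sets. -/
noncomputable def offDiagDist {X : Type*} (w : X → X → ℝ) (x y : X) : ℝ :=
  open Classical in if x = y then 0 else w x y

theorem offDiagDist_of_ne {X : Type*} (w : X → X → ℝ) {x y : X} (h : x ≠ y) :
    offDiagDist w x y = w x y :=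
  if_neg h

theorem isSemimetric_offDiagDist {X : Type*} {w : X → X → ℝ}
    (hpos : ∀ x y, x ≠ y → 0 < w x y) (hsymm : ∀ x y, w x y = w y x) :
    IsSemimetric (offDiagDist w) where
  nonneg x y := by
    unfold offDiagDist
    split_ifs with hxy
    exacts [le_rfl, (hpos x y hxy).le]
  symm x y := by
    rcases eq_or_ne x y with rfl | hxy
    · rfl
    · rw [offDiagDist_of_ne w hxy, offDiagDist_of_ne w hxy.symm, hsymm]
  eq_zero_iff x y := by
    unfold offDiagDist
    split_ifs with hxy
    exacts [iff_of_true rfl hxy, iff_of_false (hpos x y hxy).ne' hxy]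

theorem exists_pos_not_bddAbove_image {α : Type*} {S : Set α} (hS : S.Infinite) :
    ∃ f : α → ℝ, (∀ x, 0 < f x) ∧ ¬ BddAbove (f '' S) := by
  obtain ⟨g, hinj, hmem⟩ : ∃ g : ℕ → α, Function.Injective g ∧ ∀ n, g n ∈ S :=
    ⟨fun n => hS.natEmbedding S n, Subtype.val_injective.comp (hS.natEmbedding S).injective,
      fun n => (hS.natEmbedding S n).2⟩
  refine ⟨fun x => Function.invFun g x + 1, fun x => by positivity, ?_⟩
  rintro ⟨M, hM⟩
  obtain ⟨n, hn⟩ := exists_nat_gt M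
  have hle : ((Function.invFun g (g n) : ℕ) : ℝ) + 1 ≤ M := hM ⟨g n, hmem n, rfl⟩
  rw [Function.leftInverse_invFun hinj n] at hle
  linarith

namespace FarthestFor

variable {X : Type*} {d d' w : X → X → ℝ} {G : SimpleGraph X} {A B : Set X}

theorem congr (h : FarthestFor d G A B) (hdd' : ∀ a ∈ A, ∀ b ∈ B, d a b = d' a b) :
    FarthestFor d' G A B where
  __ := h
  adj_iff a ha b hb := (h.adj_iff a ha b hb).trans <| forall₄_congr fun x hx y hy => by
    rw [hdd' x hx y hy, hdd' a ha b hb]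

theorem exists_isSemimetric (h : FarthestFor w G A B) (hpos : ∀ x y, x ≠ y → 0 < w x y)
    (hsymm : ∀ x y, w x y = w y x) : ∃ d, IsSemimetric d ∧ FarthestFor d G A B :=
  ⟨offDiagDist w, isSemimetric_offDiagDist hpos hsymm,
    h.congr fun _ ha _ hb => (offDiagDist_of_ne w (h.disj.ne_of_mem ha hb)).symm⟩

theorem ne_bot_of_finite (h : FarthestFor d G A B) (hA : A.Finite) (hB : B.Finite) : G ≠ ⊥ := by
  obtain ⟨⟨a, b⟩, ⟨ha, hb⟩, hmax⟩ := exists_max_image (A ×ˢ B) (fun p => d p.1 p.2)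
    (hA.prod hB) (h.nonemptyA.prod h.nonemptyB)
  have hab : G.Adj a b := (h.adj_iff a ha b hb).2 fun x hx y hy => hmax (x, y) ⟨hx, hy⟩
  exact SimpleGraph.ne_bot_iff_exists_adj.2 ⟨a, b, hab⟩

end FarthestFor

section Realization

variable {V : Type*} {G : SimpleGraph V} {A B : Set V}

open Classical in
theorem farthestFor_ite_adj (hG : G.IsBipartiteWith A B) (hne : G ≠ ⊥) {r s : ℝ} (hrs : r < s) :
    FarthestFor (fun x y => if G.Adj x y then s else r) G A B := by
  obtain ⟨p, hp, q, hq, hpq⟩ : ∃ p ∈ A, ∃ q ∈ B, G.Adj p q := by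
    obtain ⟨u, v, huv⟩ := SimpleGraph.ne_bot_iff_exists_adj.1 hne
    rcases hG.mem_of_adj huv with ⟨hu, hv⟩ | ⟨hu, hv⟩
    exacts [⟨u, hu, v, hv, huv⟩, ⟨v, hv, u, hu, huv.symm⟩]
  refine ⟨⟨p, hp⟩, ⟨q, hq⟩, hG.disjoint, fun _ _ h => hG.mem_of_adj h,
    fun a _ b _ => ⟨fun hab x _ y _ => ?_, fun hmax => ?_⟩⟩
  · rw [if_pos hab]
    split_ifs
    exacts [le_rfl, hrs.le]
  · by_contra hab
    have hle := hmax p hp q hq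
    rw [if_pos hpq, if_neg hab] at hle
    exact hrs.not_ge hle

theorem farthestFor_bot_add {f : V → ℝ} (hA : A.Nonempty) (hB : B.Nonempty) (hAB : Disjoint A B)
    (hf : ¬ BddAbove (f '' (A ∪ B))) : FarthestFor (fun x y => f x + f y) ⊥ A B := by
  refine ⟨hA, hB, hAB, fun _ _ h => h.elim, fun a ha b hb => iff_of_false id fun hmax => hf ?_⟩
  rw [image_union, bddAbove_union]
  exact ⟨⟨f a, forall_mem_image.2 fun x hx => le_of_add_le_add_right (hmax x hx b hb)⟩,
    ⟨f b, forall_mem_image.2 fun y hy => le_of_add_le_add_left (hmax a ha y hy)⟩⟩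

theorem exists_isSemimetric_farthestFor_of_ne_bot (hG : G.IsBipartiteWith A B) (hne : G ≠ ⊥) :
    ∃ d, IsSemimetric d ∧ FarthestFor d G A B := by
  classical
  refine (farthestFor_ite_adj hG hne one_lt_two).exists_isSemimetric (fun x y _ => ?_) fun x y => ?_
  · split_ifs <;> norm_num
  · simp only [G.adj_comm x y]

theorem exists_isSemimetric_farthestFor_bot (hA : A.Nonempty) (hB : B.Nonempty)
    (hAB : Disjoint A B) (hinf : (A ∪ B).Infinite) :
    ∃ d, IsSemimetric d ∧ FarthestFor d ⊥ A B := by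
  obtain ⟨f, hpos, hf⟩ := exists_pos_not_bddAbove_image hinf
  exact (farthestFor_bot_add hA hB hAB hf).exists_isSemimetric
    (fun x y _ => add_pos (hpos x) (hpos y)) fun x y => add_comm (f x) (f y)

end Realization

/-- Corollary 3.3: a bipartite graph `G` (with parts `A`, `B` and vertex set
`A ∪ B = V`) is not isomorphic to any farthest graph iff `G` is finite and empty. -/
theorem stmt13 {V : Type u} (G : SimpleGraph V) (A B : Set V)
    (hA : A.Nonempty) (hB : B.Nonempty) (hAB : Disjoint A B)
    (hcover : A ∪ B = Set.univ)
    (hbip : ∀ u v, G.Adj u v → (u ∈ A ∧ v ∈ B) ∨ (u ∈ B ∧ v ∈ A)) :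
    (¬ ∃ (X : Type u) (d : X → X → ℝ) (H : SimpleGraph X) (A' B' : Set X),
        IsSemimetric d ∧ FarthestFor d H A' B' ∧ A' ∪ B' = Set.univ ∧
          Nonempty (G ≃g H)) ↔
      (Finite V ∧ G.edgeSet = ∅) := by
  rw [SimpleGraph.edgeSet_eq_empty]
  constructor
  · intro hnot
    have hreal : ¬ ∃ d, IsSemimetric d ∧ FarthestFor d G A B := fun ⟨d, hd, hF⟩ =>
      hnot ⟨V, d, G, A, B, hd, hF, hcover, ⟨.refl⟩⟩
    obtain rfl : G = ⊥ := by
      by_contra hne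
      exact hreal (exists_isSemimetric_farthestFor_of_ne_bot ⟨hAB, fun u v => hbip u v⟩ hne)
    refine ⟨?_, rfl⟩
    by_contra hinf
    rw [← finite_univ_iff, ← hcover] at hinf
    exact hreal (exists_isSemimetric_farthestFor_bot hA hB hAB hinf)
  · rintro ⟨hfin, rfl⟩ ⟨X, d, H, A', B', -, hF, -, ⟨φ⟩⟩
    have : Finite X := .of_equiv V φ.toEquiv
    obtain ⟨x, y, hxy⟩ :=
      SimpleGraph.ne_bot_iff_exists_adj.1 (hF.ne_bot_of_finite A'.toFinite B'.toFinite)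
    exact φ.symm.map_adj_iff.2 hxy
end

section
/- Let G be a graph. Then G is isomorphic to a farthest graph if and only if G is isomorphic to a proximinal graph. -/
open Set

universe u

/-
Pointwise inversion of a semimetric exchanges minimal and maximal cross distances, so it turns a
proximinal graph into a farthest graph on the same parts. It need not preserve proximinality of the
parts, so the converse uses two other semimetrics. A bipartite graph with an edge is proximinal for
the semimetric with value `1` on edges and `2` on non-edges. A farthest graph without edges is
infinite, as cross distances attain their maximum on finite parts. An infinite vertex set carries
positive weights `w` with infimum `0` on each of two complementary parts, and for the distance
`max (w x) (w y)` the parts are proximinal while no pair realizes their distance.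
-/

section Semimetric

variable {X : Type*} {d : X → X → ℝ} {A B : Set X}

-- On the diagonal this relies on the convention `0⁻¹ = 0`.
lemma IsSemimetric.inv (hd : IsSemimetric d) : IsSemimetric d⁻¹ where
  nonneg x y := inv_nonneg.2 (hd.nonneg x y)
  symm x y := congrArg Inv.inv (hd.symm x y)
  eq_zero_iff x y := inv_eq_zero.trans (hd.eq_zero_iff x y)

lemma IsSemimetric.pos (hd : IsSemimetric d) {x y : X} (hxy : x ≠ y) : 0 < d x y :=
  (hd.nonneg x y).lt_of_ne' (mt (hd.eq_zero_iff x y).1 hxy)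

lemma IsSemimetric.eq_setDist_iff (hd : IsSemimetric d) {a b : X} (ha : a ∈ A) (hb : b ∈ B) :
    d a b = SetDist d A B ↔ ∀ x ∈ A, ∀ y ∈ B, d a b ≤ d x y := by
  have hbdd : BddBelow (image2 d A B) := ⟨0, forall_mem_image2.2 fun x _ y _ => hd.nonneg x y⟩
  constructor
  · intro h x hx y hy
    exact h.trans_le (csInf_le hbdd (mem_image2_of_mem hx hy))
  · intro h
    have hleast : IsLeast (image2 d A B) (d a b) :=
      ⟨mem_image2_of_mem ha hb, forall_mem_image2.2 h⟩
    exact hleast.csInf_eq.symm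

lemma proximinal_of_finite_image (hA : A.Nonempty) (hfin : ∀ x, (d x '' A).Finite) :
    Proximinal d A :=
  fun x => (hA.image (d x)).csInf_mem (hfin x)

lemma proximinal_of_forall_exists_le (h : ∀ x, ∃ a ∈ A, ∀ b ∈ A, d x a ≤ d x b) :
    Proximinal d A := by
  intro x
  obtain ⟨a, ha, hle⟩ := h x
  have hleast : IsLeast (d x '' A) (d x a) := ⟨mem_image_of_mem _ ha, forall_mem_image.2 hle⟩
  exact ⟨a, ha, hleast.csInf_eq.symm⟩

end Semimetric

section ZeroOnDiag

variable {X : Type*}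

open Classical in
/-- The modification of a function of two points that makes it vanish on the diagonal; it produces
semimetrics from symmetric functions positive off the diagonal. -/
noncomputable def zeroOnDiag (g : X → X → ℝ) (x y : X) : ℝ :=
  if x = y then 0 else g x y

lemma zeroOnDiag_self (g : X → X → ℝ) (x : X) : zeroOnDiag g x x = 0 :=
  if_pos rfl

lemma zeroOnDiag_of_ne (g : X → X → ℝ) {x y : X} (hxy : x ≠ y) : zeroOnDiag g x y = g x y :=
  if_neg hxy

lemma isSemimetric_zeroOnDiag {g : X → X → ℝ} (hsymm : ∀ x y, g x y = g y x)
    (hpos : Pairwise fun x y => 0 < g x y) : IsSemimetric (zeroOnDiag g) where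
  nonneg x y := by
    obtain rfl | hxy := eq_or_ne x y
    · exact (zeroOnDiag_self g x).ge
    · exact (zeroOnDiag_of_ne g hxy).symm ▸ (hpos hxy).le
  symm x y := by
    obtain rfl | hxy := eq_or_ne x y
    · rfl
    · rw [zeroOnDiag_of_ne g hxy, zeroOnDiag_of_ne g hxy.symm, hsymm]
  eq_zero_iff x y := by
    obtain rfl | hxy := eq_or_ne x y
    · simp only [zeroOnDiag_self]
    · simp only [zeroOnDiag_of_ne g hxy, (hpos hxy).ne', hxy]

end ZeroOnDiag

section AdjDist

variable {X : Type*} {H : SimpleGraph X} {A B : Set X}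

open Classical in
/-- The semimetric with value `1` on edges and `2` on non-edges, for which every bipartite graph
with an edge is proximinal. -/
noncomputable def adjDist (H : SimpleGraph X) : X → X → ℝ :=
  zeroOnDiag fun x y => if H.Adj x y then 1 else 2

lemma isSemimetric_adjDist (H : SimpleGraph X) : IsSemimetric (adjDist H) := by
  refine isSemimetric_zeroOnDiag (fun x y => ?_) fun x y _ => ?_
  · rw [H.adj_comm x y]
  · dsimp only
    split_ifs <;> norm_num

lemma adjDist_of_adj {x y : X} (h : H.Adj x y) : adjDist H x y = 1 :=
  (zeroOnDiag_of_ne _ h.ne).trans (if_pos h)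

lemma adjDist_of_ne_of_not_adj {x y : X} (hxy : x ≠ y) (h : ¬H.Adj x y) : adjDist H x y = 2 :=
  (zeroOnDiag_of_ne _ hxy).trans (if_neg h)

lemma one_le_adjDist {x y : X} (hxy : x ≠ y) : 1 ≤ adjDist H x y := by
  by_cases h : H.Adj x y
  · exact (adjDist_of_adj h).ge
  · exact (adjDist_of_ne_of_not_adj hxy h).symm ▸ one_le_two

lemma adjDist_le_one_iff {x y : X} (hxy : x ≠ y) : adjDist H x y ≤ 1 ↔ H.Adj x y := by
  refine ⟨fun hle => by_contra fun h => ?_, fun h => (adjDist_of_adj h).le⟩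
  rw [adjDist_of_ne_of_not_adj hxy h] at hle
  norm_num at hle

lemma proximinal_adjDist (hA : A.Nonempty) : Proximinal (adjDist H) A := by
  refine proximinal_of_finite_image hA fun x => (toFinite ({0, 1, 2} : Set ℝ)).subset ?_
  rintro _ ⟨a, -, rfl⟩
  obtain rfl | hxa := eq_or_ne x a
  · exact Or.inl (zeroOnDiag_self _ x)
  by_cases h : H.Adj x a
  · exact Or.inr (Or.inl (adjDist_of_adj h))
  · exact Or.inr (Or.inr (adjDist_of_ne_of_not_adj hxa h))

lemma proximinalFor_adjDist (h : H.IsBipartiteWith A B) (hH : H ≠ ⊥) (hA : A.Nonempty)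
    (hB : B.Nonempty) : ProximinalFor (adjDist H) H A B where
  nonemptyA := hA
  nonemptyB := hB
  disj := h.disjoint
  proxA := proximinal_adjDist hA
  proxB := proximinal_adjDist hB
  edges_between := h.mem_of_adj
  adj_iff a ha b hb := by
    obtain ⟨u, hu, v, hv, huv⟩ : ∃ u ∈ A, ∃ v ∈ B, H.Adj u v := by
      obtain ⟨u, v, huv⟩ := SimpleGraph.ne_bot_iff_exists_adj.1 hH
      obtain ⟨hu, hv⟩ | ⟨hu, hv⟩ := h.mem_of_adj huv
      exacts [⟨u, hu, v, hv, huv⟩, ⟨v, hv, u, hu, huv.symm⟩]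
    rw [(isSemimetric_adjDist H).eq_setDist_iff ha hb,
      ← adjDist_le_one_iff (h.disjoint.ne_of_mem ha hb)]
    constructor
    · intro hle x hx y hy
      exact hle.trans (one_le_adjDist (h.disjoint.ne_of_mem hx hy))
    · intro hmin
      exact (hmin u hu v hv).trans_eq (adjDist_of_adj huv)

end AdjDist

section MaxDist

variable {X : Type*} {w : X → ℝ} {A B : Set X}

/-- The distance `max (w x) (w y)` between distinct points with positive weights `w`. If `w` takes
arbitrarily small values on two disjoint sets, their distance is not realized by any pair. -/
noncomputable def maxDist (w : X → ℝ) : X → X → ℝ :=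
  zeroOnDiag fun x y => max (w x) (w y)

lemma isSemimetric_maxDist (hw : ∀ x, 0 < w x) : IsSemimetric (maxDist w) :=
  isSemimetric_zeroOnDiag (fun x y => max_comm (w x) (w y)) fun x _ _ => lt_max_of_lt_left (hw x)

lemma maxDist_of_ne {x y : X} (hxy : x ≠ y) : maxDist w x y = max (w x) (w y) :=
  zeroOnDiag_of_ne _ hxy

lemma proximinal_maxDist (hw : ∀ x, 0 < w x) (hA : ∀ x, ∃ a ∈ A, w a ≤ w x) :
    Proximinal (maxDist w) A := by
  refine proximinal_of_forall_exists_le fun x => ?_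
  by_cases hx : x ∈ A
  · refine ⟨x, hx, fun b _ => ?_⟩
    exact (zeroOnDiag_self _ x).trans_le ((isSemimetric_maxDist hw).nonneg x b)
  · obtain ⟨a, ha, hax⟩ := hA x
    have hne : ∀ b ∈ A, x ≠ b := fun b hb => (ne_of_mem_of_not_mem hb hx).symm
    refine ⟨a, ha, fun b hb => ?_⟩
    calc maxDist w x a = w x := (maxDist_of_ne (hne a ha)).trans (max_eq_left hax)
      _ ≤ max (w x) (w b) := le_max_left _ _
      _ = maxDist w x b := (maxDist_of_ne (hne b hb)).symm

lemma proximinalFor_bot_maxDist [Nonempty X] (hw : ∀ x, 0 < w x) (hAB : Disjoint A B)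
    (hA : ∀ x, ∃ a ∈ A, w a < w x) (hB : ∀ x, ∃ b ∈ B, w b < w x) :
    ProximinalFor (maxDist w) ⊥ A B where
  nonemptyA := (hA (Classical.arbitrary X)).imp fun _ h => h.1
  nonemptyB := (hB (Classical.arbitrary X)).imp fun _ h => h.1
  disj := hAB
  proxA := proximinal_maxDist hw fun x => (hA x).imp fun _ h => h.imp_right le_of_lt
  proxB := proximinal_maxDist hw fun x => (hB x).imp fun _ h => h.imp_right le_of_lt
  edges_between _ _ h := h.elim
  adj_iff a ha b hb := by
    rw [(isSemimetric_maxDist hw).eq_setDist_iff ha hb, SimpleGraph.bot_adj, false_iff]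
    intro hmin
    obtain ⟨a', ha', haa'⟩ := hA a
    obtain ⟨b', hb', hbb'⟩ := hB b
    have hle := hmin a' ha' b' hb'
    rw [maxDist_of_ne (hAB.ne_of_mem ha hb), maxDist_of_ne (hAB.ne_of_mem ha' hb')] at hle
    exact hle.not_gt (max_lt_max haa' hbb')

lemma exists_proximinalFor_bot (X : Type*) [Infinite X] :
    ∃ (d : X → X → ℝ) (A B : Set X),
      IsSemimetric d ∧ ProximinalFor d ⊥ A B ∧ A ∪ B = univ := by
  obtain ⟨f, hf⟩ : ∃ f : X → ℕ, Function.Surjective f :=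
    ⟨_, Function.invFun_surjective (Infinite.natEmbedding X).injective⟩
  let w : X → ℝ := fun x => 1 / ((f x : ℝ) + 1)
  have hw : ∀ x, 0 < w x := fun x => Nat.one_div_pos_of_nat
  have hlt : ∀ {x y}, f x < f y → w y < w x := fun h => Nat.one_div_lt_one_div h
  have heven : ∀ x, ∃ a ∈ {a | Even (f a)}, w a < w x := fun x => by
    obtain ⟨a, ha⟩ := hf (2 * (f x + 1))
    exact ⟨a, by simp [ha], hlt (by lia)⟩
  have hodd : ∀ x, ∃ b ∈ {a | Even (f a)}ᶜ, w b < w x := fun x => by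
    obtain ⟨b, hb⟩ := hf (2 * f x + 1)
    exact ⟨b, by simp [hb], hlt (by lia)⟩
  exact ⟨maxDist w, _, _, isSemimetric_maxDist hw,
    proximinalFor_bot_maxDist hw disjoint_compl_right heven hodd, union_compl_self _⟩

end MaxDist

section Graph

variable {X : Type*} {d : X → X → ℝ} {H : SimpleGraph X} {A B : Set X}

lemma FarthestFor.isBipartiteWith (h : FarthestFor d H A B) : H.IsBipartiteWith A B where
  disjoint := h.disj
  mem_of_adj := h.edges_between

lemma FarthestFor.ne_bot (h : FarthestFor d H A B) (hA : A.Finite) (hB : B.Finite) : H ≠ ⊥ := by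
  obtain ⟨⟨a, b⟩, ⟨ha, hb⟩, hmax⟩ :=
    exists_max_image (A ×ˢ B) (fun p => d p.1 p.2) (hA.prod hB) (h.nonemptyA.prod h.nonemptyB)
  have hab : H.Adj a b := (h.adj_iff a ha b hb).2 fun x hx y hy => hmax (x, y) ⟨hx, hy⟩
  exact SimpleGraph.ne_bot_iff_exists_adj.2 ⟨a, b, hab⟩

lemma FarthestFor.exists_proximinalFor (h : FarthestFor d H A B) (hAB : A ∪ B = univ) :
    ∃ (d' : X → X → ℝ) (A' B' : Set X),
      IsSemimetric d' ∧ ProximinalFor d' H A' B' ∧ A' ∪ B' = univ := by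
  obtain rfl | hH := eq_or_ne H ⊥
  · have : Infinite X := not_finite_iff_infinite.1 fun _ => h.ne_bot A.toFinite B.toFinite rfl
    exact exists_proximinalFor_bot X
  · exact ⟨adjDist H, A, B, isSemimetric_adjDist H,
      proximinalFor_adjDist h.isBipartiteWith hH h.nonemptyA h.nonemptyB, hAB⟩

lemma ProximinalFor.farthestFor_inv (hd : IsSemimetric d) (h : ProximinalFor d H A B) :
    FarthestFor d⁻¹ H A B where
  nonemptyA := h.nonemptyA
  nonemptyB := h.nonemptyB
  disj := h.disj
  edges_between := h.edges_between
  adj_iff a ha b hb := by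
    have hpos : ∀ x ∈ A, ∀ y ∈ B, 0 < d x y := fun x hx y hy => hd.pos (h.disj.ne_of_mem hx hy)
    rw [h.adj_iff a ha b hb, hd.eq_setDist_iff ha hb]
    exact forall₄_congr fun x hx y hy => (inv_le_inv₀ (hpos x hx y hy) (hpos a ha b hb)).symm

end Graph

/-- Proposition 3.4: a graph `G` is isomorphic to a farthest graph iff `G` is
isomorphic to a proximinal graph. -/
theorem stmt15 {V : Type u} (G : SimpleGraph V) :
    (∃ (X : Type u) (d : X → X → ℝ) (H : SimpleGraph X) (A B : Set X),
        IsSemimetric d ∧ FarthestFor d H A B ∧ A ∪ B = Set.univ ∧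
          Nonempty (G ≃g H)) ↔
    (∃ (X : Type u) (d : X → X → ℝ) (H : SimpleGraph X) (A B : Set X),
        IsSemimetric d ∧ ProximinalFor d H A B ∧ A ∪ B = Set.univ ∧
          Nonempty (G ≃g H)) := by
  constructor
  · rintro ⟨X, d, H, A, B, -, h, hAB, hiso⟩
    obtain ⟨d', A', B', hd', h', hAB'⟩ := h.exists_proximinalFor hAB
    exact ⟨X, d', H, A', B', hd', h', hAB', hiso⟩
  · rintro ⟨X, d, H, A, B, hd, h, hAB, hiso⟩
    exact ⟨X, d⁻¹, H, A, B, hd.inv, h.farthestFor_inv hd, hAB, hiso⟩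
end
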